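/- arXiv:1909.03874 — 2 statements merged into one kernel-verified Lean document; each statement's English description precedes it below -/
import Mathlib

section
/- Let λ be a partition with degree vector n_1 > n_2 > … > n_ℓ, let p be the number of odd entries and q the number of even entries of the degree vector, and set k = p − q if p ≥ q and k = q − p − 1 otherwise, and m = k(k+1)/2. Then there exists a monic polynomial R ∈ ℚ[X] with R(0) ≠ 0 such that He_λ(X) = X^m · R(X²) and m + 2·deg(R) = |λ|. (In particular the multiplicity of 0 as a root of He_λ equals the triangular number k(k+1)/2, the size of the 2-core of λ.) -/
/-- A partition: a weakly decreasing list of positive integers. -/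
def IsPartition (l : List ℕ) : Prop :=
  l.Pairwise (· ≥ ·) ∧ ∀ x ∈ l, 0 < x

/-- The degree vector of a partition: `n_i = λ_i + ℓ(λ) − i` (here `i` is 0-indexed). -/
def degVec (l : List ℕ) (i : Fin l.length) : ℕ :=
  l.get i + (l.length - 1 - (i : ℕ))

/-- The Vandermonde determinant `Δ(n_λ) = ∏_{i<j} (n_j − n_i)` of the degree vector. -/
noncomputable def vanderQ (l : List ℕ) : ℚ :=
  ∏ i : Fin l.length, ∏ j : Fin l.length,
    if (i : ℕ) < (j : ℕ) then ((degVec l j : ℚ) - (degVec l i : ℚ)) else 1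

/-- The Wronskian Hermite polynomial
`He_λ = Wr[He_{n_1},…,He_{n_ℓ}] / Δ(n_λ)`. -/
noncomputable def HeW (l : List ℕ) : Polynomial ℚ :=
  Polynomial.C (vanderQ l)⁻¹ *
    (Matrix.of fun i j : Fin l.length =>
      (⇑Polynomial.derivative)^[(i : ℕ)]
        ((Polynomial.hermite (degVec l j)).map (Int.castRingHom ℚ))).det

/-- The number of odd entries of the degree vector. -/
def oddCount (l : List ℕ) : ℕ :=
  (Finset.univ.filter fun i : Fin l.length => Odd (degVec l i)).card

/-- The number of even entries of the degree vector. -/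
def evenCount (l : List ℕ) : ℕ :=
  (Finset.univ.filter fun i : Fin l.length => Even (degVec l i)).card

/-- `k = p − q` if `p ≥ q`, and `k = q − p − 1` otherwise. -/
def coreK (l : List ℕ) : ℕ :=
  if evenCount l ≤ oddCount l then oddCount l - evenCount l
  else evenCount l - oddCount l - 1

/-!
Fix the Hermite polynomials `He_{n_j}` with distinct degrees and multiply row `i` of their Wronskian
matrix by `X ^ i`: since `X ^ i * D ^ i` maps `X ^ n` to `n(n-1)⋯(n-i+1) * X ^ n`, each column keeps
its extreme exponents, and the extreme coefficients of the determinant become Vandermonde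
determinants. At the top the exponents are the `n_j`, giving the degree and the leading coefficient.

At the bottom one first changes basis inside each parity class. The coefficient of `X ^ (2κ + δ)` in
`He_{2a + δ}` is, up to factors depending on `a` or on `κ` alone, the falling factorial
`a(a-1)⋯(a-κ+1)`, so by Vandermonde again the `q` even Hermite polynomials have the same span as
polynomials of the form `X ^ 0 * G_0(X²), X ^ 2 * G_1(X²), …, X ^ (2q - 2) * G_{q-1}(X²)` with
`G_k(0) = 1`; likewise the `p` odd ones with exponents `1, 3, …, 2p - 1`. The order of the Wronskian
at `0` is thus `q(q-1) + p² - (p+q)(p+q-1)/2`, which is the triangular number `k(k+1)/2`.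
-/

section Expand

open Polynomial

variable {R : Type*} [CommSemiring R]

theorem exists_eq_X_pow_mul_expand {p e : ℕ} (hp : p ≠ 0) {f : R[X]}
    (hf : ∀ n, f.coeff n ≠ 0 → ∃ k, n = e + p * k) :
    ∃ g : R[X], f = X ^ e * expand R p g := by
  obtain ⟨h, rfl⟩ : X ^ e ∣ f := X_pow_dvd_iff.mpr fun n hn => by
    by_contra hne
    obtain ⟨k, rfl⟩ := hf n hne
    omega
  refine ⟨contract p h, congrArg (X ^ e * ·) ?_⟩
  ext n
  rw [coeff_expand hp.bot_lt, coeff_contract hp]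
  split_ifs with hpn
  · rw [Nat.div_mul_cancel hpn]
  · by_contra hne
    obtain ⟨k, hk⟩ := hf (n + e) (by rwa [coeff_X_pow_mul])
    exact hpn ⟨k, by omega⟩

theorem coeff_X_pow_mul_expand {p : ℕ} (hp : p ≠ 0) (e k : ℕ) (g : R[X]) :
    (X ^ e * expand R p g).coeff (e + p * k) = g.coeff k := by
  rw [add_comm, coeff_X_pow_mul, coeff_expand_mul' hp.bot_lt]

theorem exists_eq_add_mul_of_coeff_X_pow_mul_expand_ne_zero {p e n : ℕ}
    (hp : p ≠ 0) {g : R[X]} (h : (X ^ e * expand R p g).coeff n ≠ 0) : ∃ k, n = e + p * k := by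
  rw [coeff_X_pow_mul', coeff_expand hp.bot_lt] at h
  split_ifs at h with hle hdvd
  · obtain ⟨k, hk⟩ := hdvd
    exact ⟨k, by omega⟩
  all_goals exact absurd rfl h

theorem coeff_X_pow_mul_iterate_derivative (f : R[X]) (i n : ℕ) :
    (X ^ i * derivative^[i] f).coeff n = n.descFactorial i * f.coeff n := by
  rw [coeff_X_pow_mul']
  split_ifs with h
  · rw [coeff_iterate_derivative, Nat.sub_add_cancel h, nsmul_eq_mul]
  · rw [Nat.descFactorial_of_lt (not_le.mp h), Nat.cast_zero, zero_mul]

theorem natDegree_X_pow_mul_iterate_derivative_le (f : R[X]) (i : ℕ) :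
    (X ^ i * derivative^[i] f).natDegree ≤ f.natDegree :=
  natDegree_le_iff_coeff_eq_zero.mpr fun n hn => by
    rw [coeff_X_pow_mul_iterate_derivative, coeff_eq_zero_of_natDegree_lt hn, mul_zero]

theorem exists_X_pow_mul_iterate_derivative_eq {p : ℕ} (hp : p ≠ 0) (e i : ℕ)
    (g : R[X]) :
    ∃ h : R[X], h.coeff 0 = e.descFactorial i * g.coeff 0 ∧
      X ^ i * derivative^[i] (X ^ e * expand R p g) = X ^ e * expand R p h := by
  obtain ⟨h, hh⟩ := exists_eq_X_pow_mul_expand (e := e) hp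
    (f := X ^ i * derivative^[i] (X ^ e * expand R p g)) fun n hn => by
      rw [coeff_X_pow_mul_iterate_derivative] at hn
      exact exists_eq_add_mul_of_coeff_X_pow_mul_expand_ne_zero hp (right_ne_zero_of_mul hn)
  refine ⟨h, ?_, hh⟩
  rw [← coeff_X_pow_mul_expand hp e 0 h, ← hh, coeff_X_pow_mul_iterate_derivative,
    coeff_X_pow_mul_expand hp, mul_zero, add_zero]

end Expand

section DetTop

open Polynomial

theorem coeff_prod_sum_of_natDegree_le {R ι : Type*} [CommSemiring R] (s : Finset ι) {f : ι → R[X]}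
    {d : ι → ℕ} (h : ∀ i ∈ s, (f i).natDegree ≤ d i) :
    (∏ i ∈ s, f i).coeff (∑ i ∈ s, d i) = ∏ i ∈ s, (f i).coeff (d i) := by
  classical
  induction s using Finset.induction_on with
  | empty => simp
  | insert i s hi ih =>
    have hs : ∀ j ∈ s, (f j).natDegree ≤ d j := fun j hj => h j (Finset.mem_insert_of_mem hj)
    rw [Finset.prod_insert hi, Finset.sum_insert hi, Finset.prod_insert hi, ← ih hs]
    exact coeff_mul_add_eq_of_natDegree_le (h i (Finset.mem_insert_self i s))
      ((natDegree_prod_le s f).trans (Finset.sum_le_sum hs))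

variable {R ι : Type*} [CommRing R] [Fintype ι] [DecidableEq ι] {M : Matrix ι ι R[X]} {d : ι → ℕ}

theorem natDegree_det_le_sum (h : ∀ i j, (M i j).natDegree ≤ d j) :
    M.det.natDegree ≤ ∑ j, d j := by
  rw [Matrix.det_apply]
  exact natDegree_sum_le_of_forall_le _ _ fun σ _ => (natDegree_smul_le _ _).trans
    ((natDegree_prod_le _ _).trans (Finset.sum_le_sum fun i _ => h (σ i) i))

theorem coeff_det_sum_of_natDegree_le (h : ∀ i j, (M i j).natDegree ≤ d j) :
    M.det.coeff (∑ j, d j) = (Matrix.of fun i j => (M i j).coeff (d j)).det := by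
  rw [Matrix.det_apply, Matrix.det_apply, finsetSum_coeff]
  refine Finset.sum_congr rfl fun σ _ => ?_
  rw [coeff_smul, coeff_prod_sum_of_natDegree_le _ fun i _ => h (σ i) i]
  rfl

end DetTop

theorem det_descFactorial {R : Type*} [CommRing R] {n : ℕ} (v : Fin n → ℕ) :
    (Matrix.of fun i j : Fin n => ((v j).descFactorial i : R)).det =
      (Matrix.vandermonde fun j => (v j : R)).det := by
  have hint : (Matrix.of fun i j : Fin n => ((v j).descFactorial i : ℤ)).det =
      (Matrix.vandermonde fun j => (v j : ℤ)).det := by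
    rw [Matrix.det_eval_matrixOfPolynomials_eq_det_vandermonde _ (fun i => descPochhammer ℤ i)
      (fun i => descPochhammer_natDegree ℤ i) (fun i => monic_descPochhammer ℤ i),
      ← Matrix.det_transpose]
    simp only [descPochhammer_eval_eq_descFactorial]
    rfl
  have hcast := congrArg (Int.castRingHom R) hint
  rw [RingHom.map_det, RingHom.map_det] at hcast
  convert hcast <;> ext i j <;> simp [Matrix.vandermonde_apply]

theorem det_vandermonde_natCast_ne_zero {R : Type*} [CommRing R] [IsDomain R] [CharZero R] {n : ℕ}
    {v : Fin n → ℕ} (hv : Function.Injective v) :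
    (Matrix.vandermonde fun j => (v j : R)).det ≠ 0 :=
  Matrix.det_vandermonde_ne_zero_iff.mpr (Nat.cast_injective.comp hv)

section Wronskian

open Polynomial Matrix

variable {R : Type*} [CommRing R] {n : ℕ}

/-- The Wronskian matrix of `f₀, …, f_{n-1}`, whose row `i` holds the `i`-th derivatives. -/
noncomputable def wronskianMatrix (f : Fin n → R[X]) : Matrix (Fin n) (Fin n) R[X] :=
  Matrix.of fun i j => derivative^[(i : ℕ)] (f j)

theorem X_pow_mul_det_wronskianMatrix (f : Fin n → R[X]) :
    X ^ (∑ i : Fin n, (i : ℕ)) * (wronskianMatrix f).det =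
      (Matrix.of fun i j : Fin n => X ^ (i : ℕ) * derivative^[(i : ℕ)] (f j)).det := by
  rw [← Finset.prod_pow_eq_pow_sum, ← det_mul_column]
  rfl

theorem det_wronskianMatrix_mulVec (A : Matrix (Fin n) (Fin n) R) (f : Fin n → R[X]) :
    (wronskianMatrix (A.map C *ᵥ f)).det = C A.det * (wronskianMatrix f).det := by
  have hmul : wronskianMatrix (A.map C *ᵥ f) = wronskianMatrix f * (A.map C)ᵀ := by
    refine Matrix.ext fun i j => ?_
    simp only [wronskianMatrix, of_apply, mulVec, dotProduct, mul_apply, transpose_apply,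
      map_apply, iterate_derivative_sum, iterate_derivative_C_mul]
    exact Finset.sum_congr rfl fun k _ => mul_comm _ _
  rw [hmul, det_mul, det_transpose, mul_comm, ← RingHom.mapMatrix_apply, ← RingHom.map_det]

theorem natDegree_X_pow_mul_det_wronskianMatrix_le (f : Fin n → R[X]) :
    (X ^ (∑ i : Fin n, (i : ℕ)) * (wronskianMatrix f).det).natDegree ≤
      ∑ j, (f j).natDegree := by
  rw [X_pow_mul_det_wronskianMatrix]
  exact natDegree_det_le_sum fun i j => natDegree_X_pow_mul_iterate_derivative_le (f j) i

theorem exists_X_pow_mul_det_wronskianMatrix_eq {p : ℕ} (hp : p ≠ 0) (e : Fin n → ℕ)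
    (g : Fin n → R[X]) :
    ∃ h : R[X],
      h.coeff 0 = (vandermonde fun j => (e j : R)).det * ∏ j, (g j).coeff 0 ∧
      X ^ (∑ i : Fin n, (i : ℕ)) * (wronskianMatrix fun j => X ^ e j * expand R p (g j)).det =
        X ^ (∑ j, e j) * expand R p h := by
  choose S hS0 hS using fun i j : Fin n =>
    exists_X_pow_mul_iterate_derivative_eq hp (e j) i (g j)
  refine ⟨(Matrix.of S).det, ?_, ?_⟩
  · rw [← constantCoeff_apply, RingHom.map_det, ← det_descFactorial, mul_comm, ← det_mul_row]
    congr 1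
    ext i j
    simp [hS0, mul_comm]
  · rw [X_pow_mul_det_wronskianMatrix, ← Finset.prod_pow_eq_pow_sum, AlgHom.map_det,
      ← det_mul_row]
    simp only [hS, AlgHom.mapMatrix_apply, map_apply, of_apply]

theorem coeff_X_pow_mul_det_wronskianMatrix (f : Fin n → R[X]) :
    (X ^ (∑ i : Fin n, (i : ℕ)) * (wronskianMatrix f).det).coeff (∑ j, (f j).natDegree) =
      (vandermonde fun j => ((f j).natDegree : R)).det * ∏ j, (f j).leadingCoeff := by
  have hdeg (i j : Fin n) : (Matrix.of (fun i j : Fin n => X ^ (i : ℕ) * derivative^[(i : ℕ)] (f j))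
      i j).natDegree ≤ (f j).natDegree := natDegree_X_pow_mul_iterate_derivative_le (f j) i
  rw [X_pow_mul_det_wronskianMatrix, coeff_det_sum_of_natDegree_le hdeg, ← det_descFactorial,
    mul_comm, ← det_mul_row]
  simp only [of_apply, coeff_X_pow_mul_iterate_derivative, coeff_natDegree, mul_comm]

theorem natDegree_and_leadingCoeff_det_wronskianMatrix [IsDomain R] [CharZero R]
    {f : Fin n → R[X]} (hf : ∀ j, (f j).Monic)
    (hinj : Function.Injective fun j => (f j).natDegree) :
    ∑ i : Fin n, (i : ℕ) + (wronskianMatrix f).det.natDegree = ∑ j, (f j).natDegree ∧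
      (wronskianMatrix f).det.leadingCoeff =
        (vandermonde fun j => ((f j).natDegree : R)).det := by
  have hcoeff := coeff_X_pow_mul_det_wronskianMatrix f
  simp only [(hf _).leadingCoeff, Finset.prod_const_one, mul_one] at hcoeff
  have hne : (X ^ (∑ i : Fin n, (i : ℕ)) * (wronskianMatrix f).det).coeff
      (∑ j, (f j).natDegree) ≠ 0 := hcoeff ▸ det_vandermonde_natCast_ne_zero hinj
  have hdeg := natDegree_eq_of_le_of_coeff_ne_zero
    (natDegree_X_pow_mul_det_wronskianMatrix_le f) hne
  constructor
  · have hW : (wronskianMatrix f).det ≠ 0 := fun h => hne (by rw [h, mul_zero, coeff_zero])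
    rw [← hdeg, natDegree_mul (pow_ne_zero _ X_ne_zero) hW, natDegree_X_pow]
  · rw [← hcoeff, ← hdeg, coeff_natDegree, leadingCoeff_mul, leadingCoeff_X_pow, one_mul]

end Wronskian

section Echelon

open Polynomial Matrix

theorem exists_map_C_mulVec_X_pow_mul_eq {R : Type*} [CommRing R] {q : ℕ} (F : Fin q → R[X])
    {A : Matrix (Fin q) (Fin q) R} (hA : IsUnit A.det) (hF : ∀ i k, A i k = (F i).coeff k) :
    ∃ G : Fin q → R[X], (∀ k, (G k).coeff 0 = 1) ∧
      A.map C *ᵥ (fun k => X ^ (k : ℕ) * G k) = F := by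
  set P : Fin q → R[X] := A⁻¹.map C *ᵥ F
  have hcoeff (k j : Fin q) : (P k).coeff j = (1 : Matrix (Fin q) (Fin q) R) k j := by
    rw [← nonsing_inv_mul A hA, mul_apply]
    simp [P, mulVec, dotProduct, finsetSum_coeff, hF]
  have hdvd (k : Fin q) : X ^ (k : ℕ) ∣ P k := X_pow_dvd_iff.mpr fun j hj => by
    rw [hcoeff k ⟨j, hj.trans k.2⟩, one_apply_ne (Fin.ne_of_gt hj)]
  choose G hG using hdvd
  refine ⟨G, fun k => ?_, ?_⟩
  · rw [← one_apply_eq (α := R) k, ← hcoeff k k, hG, coeff_X_pow_mul', if_pos le_rfl, Nat.sub_self]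
  · rw [← funext hG, mulVec_mulVec, ← Matrix.map_mul, mul_nonsing_inv A hA,
      Matrix.map_one C C_0 C_1, one_mulVec]

end Echelon

section HermiteRat

open Polynomial Matrix
open scoped Nat Finset

/-- The Hermite polynomial `He_n` with rational coefficients. -/
noncomputable def hermiteRat (n : ℕ) : ℚ[X] :=
  (hermite n).map (Int.castRingHom ℚ)

theorem monic_hermiteRat (n : ℕ) : (hermiteRat n).Monic :=
  (hermite_monic n).map _

theorem natDegree_hermiteRat (n : ℕ) : (hermiteRat n).natDegree = n := by
  rw [hermiteRat, (hermite_monic n).natDegree_map, natDegree_hermite]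

theorem factorial_two_mul_eq_doubleFactorial_mul (m : ℕ) :
    (2 * m)! = (2 * m - 1)‼ * (2 ^ m * m !) := by
  rcases m with _ | m
  · rfl
  · rw [← Nat.doubleFactorial_two_mul]
    exact (Nat.factorial_eq_mul_doubleFactorial (2 * m + 1)).trans (mul_comm _ _)

theorem coeff_hermite_mul_factorial (m k : ℕ) :
    (hermite (2 * m + k)).coeff k * (2 ^ m * m ! * k !) = (-1) ^ m * (2 * m + k)! := by
  rw [coeff_hermite_explicit, ← Nat.add_choose_mul_factorial_mul_factorial, add_comm (2 * m) k,
    Nat.choose_symm_add, factorial_two_mul_eq_doubleFactorial_mul]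
  push_cast
  ring

theorem coeff_hermiteRat (a κ δ : ℕ) :
    (hermiteRat (2 * a + δ)).coeff (2 * κ + δ) =
      (2 * a + δ)! / ((-2) ^ a * a !) * ((-2) ^ κ / (2 * κ + δ)! * a.descFactorial κ) := by
  rw [hermiteRat, coeff_map, eq_intCast]
  rcases le_or_gt κ a with h | h
  · obtain ⟨m, rfl⟩ := Nat.exists_eq_add_of_le' h
    have hcoeff := congrArg (Int.cast : ℤ → ℚ) (coeff_hermite_mul_factorial m (2 * κ + δ))
    have hdesc := congrArg (Nat.cast : ℕ → ℚ) (Nat.factorial_mul_descFactorial h)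
    rw [Nat.add_sub_cancel] at hdesc
    rw [show 2 * (m + κ) + δ = 2 * m + (2 * κ + δ) by ring]
    push_cast at hcoeff hdesc
    have hne : ((m + κ).descFactorial κ : ℚ) ≠ 0 :=
      right_ne_zero_of_mul (hdesc.trans_ne (by positivity))
    have hc := (eq_div_iff (by positivity)).mpr hcoeff
    rw [hc, ← hdesc, pow_add, neg_pow 2 m]
    field_simp
    rw [← pow_mul, mul_comm, pow_mul, neg_one_sq, one_pow]
  · rw [Nat.descFactorial_of_lt h, coeff_hermite_of_lt (by omega)]
    simp

theorem exists_hermiteRat_eq_X_pow_mul_expand {δ : ℕ} (hδ : δ < 2) (a : ℕ) :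
    ∃ F : ℚ[X], hermiteRat (2 * a + δ) = X ^ δ * expand ℚ 2 F := by
  refine exists_eq_X_pow_mul_expand two_ne_zero fun n hn => ?_
  by_contra! hne
  refine hn ?_
  rw [hermiteRat, coeff_map]
  rcases lt_or_ge (2 * a + δ) n with hlt | _
  · rw [coeff_hermite_of_lt hlt, map_zero]
  · have := hne ((n - δ) / 2)
    rw [coeff_hermite_of_odd_add (by rw [Nat.odd_iff]; omega), map_zero]

theorem det_coeff_hermiteRat_ne_zero {q : ℕ} {a : Fin q → ℕ} (ha : Function.Injective a) (δ : ℕ) :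
    (Matrix.of fun i k : Fin q => (hermiteRat (2 * a i + δ)).coeff (2 * k + δ)).det ≠ 0 := by
  have hdesc : (Matrix.of fun i k : Fin q => ((a i).descFactorial k : ℚ)).det ≠ 0 := by
    rw [← det_transpose]
    exact (det_descFactorial (R := ℚ) a).trans_ne (det_vandermonde_natCast_ne_zero ha)
  simp only [coeff_hermiteRat]
  have hcol := det_mul_row (fun k : Fin q => ((-2) ^ (k : ℕ) / (2 * k + δ)! : ℚ))
    (Matrix.of fun i k : Fin q => ((a i).descFactorial k : ℚ))
  have hrow := det_mul_column (fun i => ((2 * a i + δ)! / ((-2) ^ a i * (a i)!) : ℚ))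
    (Matrix.of fun i k : Fin q => ((-2) ^ (k : ℕ) / (2 * k + δ)! * (a i).descFactorial k : ℚ))
  simp only [of_apply] at hcol hrow
  rw [hrow, hcol]
  refine mul_ne_zero (Finset.prod_ne_zero_iff.mpr fun i _ => ?_)
    (mul_ne_zero (Finset.prod_ne_zero_iff.mpr fun k _ => ?_) hdesc) <;> positivity

theorem exists_echelon_hermiteRat_of_parity {q : ℕ} {a : Fin q → ℕ} (ha : Function.Injective a)
    {δ : ℕ} (hδ : δ < 2) :
    ∃ (A : Matrix (Fin q) (Fin q) ℚ) (G : Fin q → ℚ[X]), A.det ≠ 0 ∧ (∀ k, (G k).coeff 0 = 1) ∧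
      A.map C *ᵥ (fun k => X ^ (2 * (k : ℕ) + δ) * expand ℚ 2 (G k)) =
        fun i => hermiteRat (2 * a i + δ) := by
  choose F hF using fun i => exists_hermiteRat_eq_X_pow_mul_expand hδ (a i)
  have hA := det_coeff_hermiteRat_ne_zero ha δ
  obtain ⟨G, hG, hAG⟩ := exists_map_C_mulVec_X_pow_mul_eq F hA.isUnit fun i k => by
    rw [of_apply, hF, add_comm, coeff_X_pow_mul_expand two_ne_zero]
  refine ⟨_, G, hA, hG, funext fun i => ?_⟩
  rw [hF, ← hAG]
  simp only [mulVec, dotProduct, map_apply, map_sum, map_mul, map_pow, expand_C, expand_X,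
    Finset.mul_sum]
  exact Finset.sum_congr rfl fun k _ => by ring

theorem exists_equiv_comp_eq_sumElim_even_odd {ι : Type*} [Fintype ι] (d : ι → ℕ) :
    ∃ (σ : Fin #{i | Even (d i)} ⊕ Fin #{i | Odd (d i)} ≃ ι)
        (a : Fin #{i | Even (d i)} → ℕ) (b : Fin #{i | Odd (d i)} → ℕ),
      d ∘ σ = Sum.elim (fun i => 2 * a i) fun i => 2 * b i + 1 := by
  let ε := ({i | Even (d i)} : Finset ι).equivFin.symm
  let ω := ({i | Odd (d i)} : Finset ι).equivFin.symm
  have hε (i) : Even (d (ε i)) := (Finset.mem_filter.mp (ε i).2).2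
  have hω (i) : Odd (d (ω i)) := (Finset.mem_filter.mp (ω i).2).2
  have hσ : Function.Bijective (Sum.elim (fun i => (ε i : ι)) fun i => (ω i : ι)) := by
    constructor
    · rintro (i | i) (j | j) h
      · exact congrArg Sum.inl (ε.injective (Subtype.ext h))
      · exact absurd (hε i) (Nat.not_even_iff_odd.mpr (congrArg d h ▸ hω j))
      · exact absurd (hε j) (Nat.not_even_iff_odd.mpr (congrArg d h ▸ hω i))
      · exact congrArg Sum.inr (ω.injective (Subtype.ext h))
    · intro x
      rcases Nat.even_or_odd (d x) with hx | hx
      · exact ⟨Sum.inl (ε.symm ⟨x, by simpa using hx⟩), by simp⟩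
      · exact ⟨Sum.inr (ω.symm ⟨x, by simpa using hx⟩), by simp⟩
  refine ⟨Equiv.ofBijective _ hσ, fun i => d (ε i) / 2, fun i => d (ω i) / 2, funext ?_⟩
  rintro (i | i)
  · exact (Nat.two_mul_div_two_of_even (hε i)).symm
  · exact (Nat.two_mul_div_two_add_one_of_odd (hω i)).symm

theorem exists_echelon_hermiteRat {ι : Type*} [Fintype ι] [DecidableEq ι] {d : ι → ℕ}
    (hd : Function.Injective d) :
    ∃ (A : Matrix ι ι ℚ) (e : ι → ℕ) (g : ι → ℚ[X]),
      A.det ≠ 0 ∧ Function.Injective e ∧ (∀ j, (g j).coeff 0 = 1) ∧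
      ∑ j, e j = ∑ i : Fin #{i | Even (d i)}, 2 * (i : ℕ) +
        ∑ i : Fin #{i | Odd (d i)}, (2 * (i : ℕ) + 1) ∧
      A.map C *ᵥ (fun j => X ^ e j * expand ℚ 2 (g j)) = fun j => hermiteRat (d j) := by
  obtain ⟨σ, a, b, hab⟩ := exists_equiv_comp_eq_sumElim_even_odd d
  have hinj : Function.Injective (Sum.elim (fun i => 2 * a i) fun i => 2 * b i + 1) :=
    hab ▸ hd.comp σ.injective
  have ha : Function.Injective a := fun i j h => Sum.inl_injective (hinj (by simp [h]))
  have hb : Function.Injective b := fun i j h => Sum.inr_injective (hinj (by simp [h]))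
  obtain ⟨A, G, hA, hG, hAG⟩ := exists_echelon_hermiteRat_of_parity ha zero_lt_two
  obtain ⟨B, H, hB, hH, hBH⟩ := exists_echelon_hermiteRat_of_parity hb one_lt_two
  let e : Fin #{i | Even (d i)} ⊕ Fin #{i | Odd (d i)} → ℕ :=
    Sum.elim (fun k => 2 * (k : ℕ)) fun k => 2 * (k : ℕ) + 1
  refine ⟨(fromBlocks A 0 0 B).submatrix σ.symm σ.symm, e ∘ σ.symm, Sum.elim G H ∘ σ.symm,
    ?_, ?_, ?_, ?_, ?_⟩
  · rw [det_submatrix_equiv_self, det_fromBlocks_zero₂₁]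
    exact mul_ne_zero hA hB
  · refine Function.Injective.comp ?_ σ.symm.injective
    rintro (i | i) (j | j) h <;> simp only [e, Sum.elim_inl, Sum.elim_inr] at h
    · exact congrArg Sum.inl (Fin.ext (by omega))
    · omega
    · omega
    · exact congrArg Sum.inr (Fin.ext (by omega))
  · intro j
    rcases hj : σ.symm j with k | k <;> simp [hj, hG, hH]
  · exact (Equiv.sum_comp σ.symm e).trans (Fintype.sum_sum_type e)
  · have hblock : (fromBlocks A 0 0 B).map C *ᵥ
        (fun j => X ^ e j * expand ℚ 2 (Sum.elim G H j)) = fun j => hermiteRat ((d ∘ σ) j) := by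
      rw [fromBlocks_map, fromBlocks_mulVec, Matrix.map_zero _ C_0, Matrix.map_zero _ C_0,
        zero_mulVec, zero_mulVec, add_zero, zero_add]
      rw [hab]
      exact funext (Sum.rec (congrFun hAG) (congrFun hBH))
    refine funext fun j => (Equiv.sum_comp σ.symm _).trans ((congrFun hblock (σ.symm j)).trans ?_)
    rw [Function.comp_apply, σ.apply_symm_apply]

theorem sum_even_add_sum_odd_eq_sum_add_triangle {p q k : ℕ}
    (hk : k = if q ≤ p then p - q else q - p - 1) :
    ∑ i : Fin q, 2 * (i : ℕ) + ∑ i : Fin p, (2 * (i : ℕ) + 1) =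
      ∑ i : Fin (q + p), (i : ℕ) + k * (k + 1) / 2 := by
  have hsum (n : ℕ) : (∑ i : Fin n, (i : ℕ)) * 2 + n = n * n := by
    rw [Fin.sum_univ_eq_sum_range fun i => i, Finset.sum_range_id_mul_two]
    cases n with
    | zero => rfl
    | succ n => rw [Nat.add_sub_cancel]; ring
  have hk2 : k * (k + 1) / 2 * 2 = k * (k + 1) :=
    Nat.div_mul_cancel (Nat.even_mul_succ_self k).two_dvd
  have hq := hsum q
  have hp := hsum p
  have hqp := hsum (q + p)
  simp only [Finset.sum_add_distrib, ← Finset.mul_sum, Finset.sum_const, Finset.card_univ,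
    Fintype.card_fin, smul_eq_mul, mul_one]
  split_ifs at hk with h
  · obtain rfl : p = q + k := by omega
    linarith
  · obtain rfl : q = p + k + 1 := by omega
    linarith

theorem exists_det_wronskianMatrix_hermiteRat_eq {n m : ℕ} {d : Fin n → ℕ}
    (hd : Function.Injective d)
    (hm : ∑ i : Fin #{i | Even (d i)}, 2 * (i : ℕ) + ∑ i : Fin #{i | Odd (d i)}, (2 * (i : ℕ) + 1) =
      ∑ i : Fin n, (i : ℕ) + m) :
    ∃ R : ℚ[X], R.coeff 0 ≠ 0 ∧
      (wronskianMatrix fun j => hermiteRat (d j)).det = X ^ m * expand ℚ 2 R := by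
  obtain ⟨A, e, g, hA, he, hg, hsum, hAg⟩ := exists_echelon_hermiteRat hd
  obtain ⟨h, h0, hW⟩ := exists_X_pow_mul_det_wronskianMatrix_eq two_ne_zero e g
  refine ⟨C A.det * h, ?_, mul_left_cancel₀ (pow_ne_zero (∑ i : Fin n, (i : ℕ)) X_ne_zero) ?_⟩
  · simp only [hg, Finset.prod_const_one, mul_one] at h0
    rw [coeff_C_mul, h0]
    exact mul_ne_zero hA (det_vandermonde_natCast_ne_zero he)
  · rw [← hAg, det_wronskianMatrix_mulVec, mul_left_comm, hW, hsum, hm, map_mul, expand_C, pow_add]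
    ring

end HermiteRat

section DegVec

open Polynomial Matrix

theorem degVec_injective {l : List ℕ} (hl : l.Pairwise (· ≥ ·)) :
    Function.Injective (degVec l) := by
  refine StrictAnti.injective fun i j hij => ?_
  have hle := List.pairwise_iff_get.mp hl i j hij
  have := Fin.lt_def.mp hij
  have := j.isLt
  simp only [degVec]
  omega

theorem sum_degVec (l : List ℕ) :
    ∑ j, degVec l j = ∑ i : Fin l.length, (i : ℕ) + l.sum := by
  have hrev : ∑ i : Fin l.length, (l.length - 1 - (i : ℕ)) = ∑ i : Fin l.length, (i : ℕ) :=
    Fintype.sum_equiv Fin.revPerm _ _ fun i => by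
      rw [Fin.revPerm_apply, Fin.val_rev]
      omega
  simp only [degVec, Finset.sum_add_distrib, hrev]
  rw [← List.sum_ofFn, List.ofFn_get, add_comm]

theorem evenCount_add_oddCount (l : List ℕ) : evenCount l + oddCount l = l.length := by
  simpa only [evenCount, oddCount, Nat.not_even_iff_odd, Finset.card_univ, Fintype.card_fin] using
    Finset.card_filter_add_card_filter_not (s := Finset.univ) fun i => Even (degVec l i)

theorem vanderQ_eq_det_vandermonde (l : List ℕ) :
    vanderQ l = (vandermonde fun i => (degVec l i : ℚ)).det := by
  rw [det_vandermonde, vanderQ]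
  refine Finset.prod_congr rfl fun i _ => ?_
  rw [← Finset.prod_filter, ← Finset.filter_lt_eq_Ioi]
  rfl

theorem HeW_eq_C_mul_det_wronskianMatrix (l : List ℕ) :
    HeW l = C (vanderQ l)⁻¹ * (wronskianMatrix fun j => hermiteRat (degVec l j)).det :=
  rfl

theorem wronskianHermite_factorization_general (l : List ℕ) (hl : Function.Injective (degVec l)) :
    ∃ R : ℚ[X], R.Monic ∧ R.eval 0 ≠ 0 ∧
      HeW l = X ^ (coreK l * (coreK l + 1) / 2) * R.comp (X ^ 2) ∧
      coreK l * (coreK l + 1) / 2 + 2 * R.natDegree = l.sum := by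
  have hm := sum_even_add_sum_odd_eq_sum_add_triangle (k := coreK l) rfl
  rw [evenCount_add_oddCount] at hm
  obtain ⟨R, hR0, hW⟩ := exists_det_wronskianMatrix_hermiteRat_eq hl hm
  obtain ⟨hdeg, hlead⟩ := natDegree_and_leadingCoeff_det_wronskianMatrix
    (fun j => monic_hermiteRat (degVec l j)) (by simpa only [natDegree_hermiteRat] using hl)
  simp only [natDegree_hermiteRat, sum_degVec, add_right_inj, ← vanderQ_eq_det_vandermonde]
    at hdeg hlead
  have hv : vanderQ l ≠ 0 :=
    (vanderQ_eq_det_vandermonde l).trans_ne (det_vandermonde_natCast_ne_zero hl)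
  have hE : expand ℚ 2 R ≠ 0 := (expand_ne_zero two_pos).mpr
    (by rintro rfl; exact hR0 (coeff_zero 0))
  refine ⟨C (vanderQ l)⁻¹ * R, ?_, ?_, ?_, ?_⟩
  · refine monic_C_mul_of_mul_leadingCoeff_eq_one ?_
    rw [hW, leadingCoeff_mul, leadingCoeff_X_pow, one_mul, leadingCoeff_expand two_pos] at hlead
    rw [hlead, inv_mul_cancel₀ hv]
  · rw [← coeff_zero_eq_eval_zero, coeff_C_mul]
    exact mul_ne_zero (inv_ne_zero hv) hR0
  · rw [HeW_eq_C_mul_det_wronskianMatrix, hW, ← expand_eq_comp_X_pow, map_mul, expand_C,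
      mul_left_comm]
  · rw [natDegree_C_mul (inv_ne_zero hv), ← hdeg, hW, natDegree_X_pow_mul _ hE, natDegree_expand]
    ring

end DegVec

/-- Factorization of the Wronskian Hermite polynomial:
`He_λ(X) = X^{k(k+1)/2} · R(X²)` with `R` monic, `R(0) ≠ 0`, and
`k(k+1)/2 + 2·deg R = |λ|`. -/
theorem wronskianHermite_factorization (l : List ℕ) (hl : IsPartition l) :
    ∃ R : Polynomial ℚ, R.Monic ∧ R.eval 0 ≠ 0 ∧
      HeW l = Polynomial.X ^ (coreK l * (coreK l + 1) / 2) *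
        R.comp (Polynomial.X ^ 2) ∧
      coreK l * (coreK l + 1) / 2 + 2 * R.natDegree = l.sum :=
  wronskianHermite_factorization_general l (degVec_injective hl.1)
end

section
/- Let λ be a partition with degree vector n_1 > … > n_ℓ, let p be the number of odd entries and q the number of even entries of the degree vector, and set k = p − q if p ≥ q and k = q − p − 1 otherwise. Then the natural number ∏_{i=1}^{k} (2i−1)^{k+1−i} (the product of the hook lengths of the staircase partition (k, k−1, …, 2, 1), which is the 2-core of λ) divides H_odd(λ), the product of all odd hook lengths of λ. -/
/-- The conjugate partition entry `λ'_j = #{i : λ_i ≥ j}`. -/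
def conjPart (l : List ℕ) (j : ℕ) : ℕ :=
  (l.filter fun a => decide (j ≤ a)).length

/-- The hook length of the cell in (0-indexed) row `i` and (1-indexed) column `j`:
`h(i,j) = (λ_i − j) + (λ'_j − i) + 1`. -/
def hookLen (l : List ℕ) (i : Fin l.length) (j : ℕ) : ℕ :=
  (l.get i - j) + (conjPart l j - ((i : ℕ) + 1)) + 1

/-- The product of all odd hook lengths of the partition. -/
def Hodd (l : List ℕ) : ℕ :=
  ∏ i : Fin l.length, ∏ j ∈ Finset.Icc 1 (l.get i),
    if Odd (hookLen l i j) then hookLen l i j else 1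

/-- The product of the hook lengths of the staircase partition `(k,k−1,…,2,1)`:
`H(δ_k) = ∏_{i=1}^{k} (2i−1)^{k+1−i}`. -/
def Hstaircase (k : ℕ) : ℕ :=
  ∏ i ∈ Finset.Icc 1 k, (2 * i - 1) ^ (k + 1 - i)

/-!
The beta-set `X` of a partition (the set of entries of its degree vector) encodes the hooks: the
hook lengths in the row of degree `n` are the `n - m` with `m < n` a gap of `X`. By comparing
prime powers it is enough to show, for each odd `P`, that `P` divides at least as many odd hook
lengths of `λ` as hook lengths of the staircase.

Weight a hook `n - m` by `1` if it is odd and `-1` if it is even. The total weight of the hooks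
divisible by `P` is a lower bound for the number of odd ones, and it has a closed form: if `c_r` is
the sum of `(-1)^n` over the `n ∈ X` congruent to `r` modulo `P`, twice the weight is
`∑ r < P, c_r (c_r - (-1)^r)`. Only `∑ r, c_r` is prescribed, and by convexity this quadratic
form is at least `m (2 ∑ r, c_r - 1) - P m²` for every integer `m`. For a suitable `m` the bound is
exactly twice the number of hook lengths of the staircase divisible by `P`.
-/

open Finset

section PrimePowers

variable {ι κ : Type*} {s : Finset ι} {t : Finset κ} {f : ι → ℕ} {g : κ → ℕ}

lemma factorization_prod_eq_sum_card_filter_pow_dvd {p b : ℕ} (hp : p.Prime)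
    (hf : ∀ x ∈ s, f x ≠ 0) (hb : ∀ x ∈ s, f x < p ^ b) :
    (∏ x ∈ s, f x).factorization p = ∑ e ∈ Ico 1 b, #{x ∈ s | p ^ e ∣ f x} := by
  rw [Nat.factorization_prod_apply hf]
  simp_rw [card_filter]
  rw [sum_comm]
  refine sum_congr rfl fun x hx ↦ ?_
  rw [Nat.factorization_eq_card_pow_dvd_of_lt hp (Nat.pos_of_ne_zero (hf x hx)) (hb x hx),
    card_filter]

theorem prod_dvd_prod_of_card_filter_dvd_le (hf : ∀ x ∈ s, f x ≠ 0) (hg : ∀ x ∈ t, g x ≠ 0)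
    (h : ∀ d, IsPrimePow d → #{x ∈ s | d ∣ f x} ≤ #{x ∈ t | d ∣ g x}) :
    ∏ x ∈ s, f x ∣ ∏ x ∈ t, g x := by
  rw [← Nat.factorization_prime_le_iff_dvd (prod_ne_zero_iff.2 hf) (prod_ne_zero_iff.2 hg)]
  intro p hp
  have lt_pow {n : ℕ} (hn : n ≤ ∑ x ∈ s, f x + ∑ x ∈ t, g x) :
      n < p ^ (∑ x ∈ s, f x + ∑ x ∈ t, g x) := hn.trans_lt (Nat.lt_pow_self hp.one_lt)
  rw [factorization_prod_eq_sum_card_filter_pow_dvd hp hf fun x hx ↦ lt_pow <|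
      (single_le_sum_of_canonicallyOrdered hx).trans (Nat.le_add_right _ _),
    factorization_prod_eq_sum_card_filter_pow_dvd hp hg fun x hx ↦ lt_pow <|
      (single_le_sum_of_canonicallyOrdered hx).trans (Nat.le_add_left _ _)]
  exact sum_le_sum fun e he ↦ h _ (hp.isPrimePow.pow (by have := mem_Ico.1 he; lia))

end PrimePowers

section Staircase

lemma Hstaircase_eq_prod_prod (k : ℕ) :
    Hstaircase k = ∏ m ∈ Icc 1 k, ∏ i ∈ Icc 1 m, (2 * i - 1) := by
  have prod_col (i : ℕ) : (2 * i - 1) ^ (k + 1 - i) = ∏ _m ∈ Icc i k, (2 * i - 1) := by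
    rw [prod_const, Nat.card_Icc]
  simp_rw [Hstaircase, prod_col]
  exact prod_comm' fun i m ↦ by simp only [mem_Icc]; lia

lemma two_mul_add_one_dvd_two_mul_add_one_iff (h m : ℕ) :
    2 * h + 1 ∣ 2 * m + 1 ↔ 2 * h + 1 ∣ m + h + 1 := by
  have cop : Nat.Coprime (2 * h + 1) 2 := by simp
  rw [← cop.dvd_mul_left (n := m + h + 1), show 2 * (m + h + 1) = 2 * m + 1 + (2 * h + 1) by ring,
    Nat.dvd_add_self_right]

lemma card_filter_dvd_two_mul_sub_one (h m : ℕ) :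
    #{i ∈ Icc 1 m | 2 * h + 1 ∣ 2 * i - 1} = (m + h) / (2 * h + 1) := by
  induction m with
  | zero => simp [Nat.div_eq_of_lt (show h < 2 * h + 1 by lia)]
  | succ m ih =>
    rw [card_filter, sum_Icc_succ_top (by lia), ← card_filter, ih, add_right_comm m 1 h,
      Nat.succ_div, show 2 * (m + 1) - 1 = 2 * m + 1 by lia]
    simp only [two_mul_add_one_dvd_two_mul_add_one_iff]

lemma two_mul_sum_Icc_add_div (h k : ℕ) :
    2 * ∑ m ∈ Icc 1 k, (((m + h) / (2 * h + 1) : ℕ) : ℤ) =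
      ((k + h) / (2 * h + 1) : ℕ) * (2 * k + 1) -
        (2 * h + 1) * (((k + h) / (2 * h + 1) : ℕ) : ℤ) ^ 2 := by
  induction k with
  | zero => simp [Nat.div_eq_of_lt (show h < 2 * h + 1 by lia)]
  | succ k ih =>
    rw [sum_Icc_succ_top (by lia), mul_add, ih, add_right_comm k 1 h, Nat.succ_div]
    split_ifs with hdvd
    · have quot : (2 * h + 1 : ℤ) * (((k + h) / (2 * h + 1) : ℕ) + 1) = k + h + 1 := by
        have := Nat.mul_div_cancel' hdvd
        rw [Nat.succ_div, if_pos hdvd] at this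
        exact_mod_cast this
      push_cast at quot ⊢
      linear_combination 2 * quot
    · push_cast
      ring

end Staircase

section SignedGaps

/-- The odd-hook gaps of a beta-set `X` below `n`: the `m < n` outside `X` for which the hook length
`n - m` is odd. -/
def oddGaps (X : Finset ℕ) (n : ℕ) : Finset ℕ := {m ∈ range n \ X | Odd (n - m)}

/-- The charge of the residue class of `r` modulo `P` in `X`: its number of even elements minus its
number of odd elements. -/
def residueCharge (P : ℕ) (X : Finset ℕ) (r : ℕ) : ℤ := ∑ n ∈ X with n % P = r, (-1) ^ n

variable {P : ℕ}

lemma filter_range_mod_eq {r : ℕ} (hr : r < P) (a : ℕ) :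
    {m ∈ range (r + P * a) | m % P = r} = (range a).image fun b ↦ r + P * b := by
  ext m
  simp only [mem_filter, mem_range, mem_image]
  constructor
  · rintro ⟨hm, hmod⟩
    have hdiv : r + P * (m / P) = m := hmod ▸ Nat.mod_add_div m P
    exact ⟨m / P, Nat.lt_of_mul_lt_mul_left (a := P) (by lia), hdiv⟩
  · rintro ⟨b, hb, rfl⟩
    have hP : 0 < P := hr.pos
    exact ⟨by gcongr, by rw [Nat.add_mul_mod_self_left, Nat.mod_eq_of_lt hr]⟩

lemma two_mul_sum_range_neg_one_pow_of_mod_eq (hP : Odd P) {n r : ℕ} (hn : n % P = r) :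
    2 * ∑ m ∈ range n with m % P = r, (-1 : ℤ) ^ m = (-1) ^ r - (-1) ^ n := by
  have hr : r < P := hn ▸ Nat.mod_lt n hP.pos
  have geom := mul_neg_geom_sum (-1 : ℤ) (n / P)
  rw [← Nat.mod_add_div n P, hn, filter_range_mod_eq hr, sum_image (by simp [hP.pos.ne'])]
  simp only [pow_add, pow_mul, hP.neg_one_pow, ← mul_sum]
  linear_combination (-1) ^ r * geom

lemma two_mul_sum_gaps_neg_one_pow_of_mod_eq (hP : Odd P) {X : Finset ℕ} {n r : ℕ}
    (hX : X ⊆ range n) (hn : n % P = r) :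
    2 * ∑ m ∈ range n \ X with m % P = r, (-1 : ℤ) ^ m =
      (-1) ^ r - (-1) ^ n - 2 * residueCharge P X r := by
  have sum_split : ∑ m ∈ range n \ X with m % P = r, (-1 : ℤ) ^ m + residueCharge P X r =
      ∑ m ∈ range n with m % P = r, (-1 : ℤ) ^ m := by
    rw [residueCharge, sum_filter, sum_filter, sum_filter, sum_sdiff hX]
  linear_combination 2 * sum_split + two_mul_sum_range_neg_one_pow_of_mod_eq hP hn

/-- Adding a new maximal element `n` to `X` leaves the gaps below the old elements unchanged and
creates the gaps below `n`, whose signed count is an alternating sum minus the old charge. -/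
lemma two_mul_sum_gaps_residue (hP : Odd P) (X : Finset ℕ) (r : ℕ) :
    2 * ∑ n ∈ X with n % P = r, ∑ m ∈ range n \ X with m % P = r, -(-1 : ℤ) ^ (n + m) =
      residueCharge P X r * (residueCharge P X r - (-1) ^ r) := by
  induction X using Finset.induction_on_max with
  | empty => simp [residueCharge]
  | insert n X hlt ih =>
    have hn : n ∉ X := fun h ↦ (hlt n h).false
    have gaps_old : ∀ a ≤ n, range a \ insert n X = range a \ X := fun a ha ↦
      sdiff_insert_of_notMem (by simpa using ha) X
    have sum_old : ∑ a ∈ X with a % P = r,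
          ∑ m ∈ range a \ insert n X with m % P = r, -(-1 : ℤ) ^ (a + m) =
        ∑ a ∈ X with a % P = r, ∑ m ∈ range a \ X with m % P = r, -(-1 : ℤ) ^ (a + m) :=
      sum_congr rfl fun a ha ↦ by rw [gaps_old a (hlt a (mem_filter.1 ha).1).le]
    by_cases hr : n % P = r
    · have hn' : n ∉ ({a ∈ X | a % P = r} : Finset ℕ) := fun h ↦ hn (mem_filter.1 h).1
      have charge_insert :
          residueCharge P (insert n X) r = (-1) ^ n + residueCharge P X r := by
        rw [residueCharge, filter_insert, if_pos hr, sum_insert hn', residueCharge]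
      have sum_gaps_n := two_mul_sum_gaps_neg_one_pow_of_mod_eq hP
        (fun m hm ↦ mem_range.2 (hlt m hm)) hr
      rw [filter_insert, if_pos hr, sum_insert hn', sum_old, gaps_old n le_rfl, mul_add, ih,
        charge_insert]
      simp only [pow_add, ← mul_sum, sum_neg_distrib]
      linear_combination (-(-1 : ℤ) ^ n) * sum_gaps_n
    · have charge_insert : residueCharge P (insert n X) r = residueCharge P X r := by
        rw [residueCharge, filter_insert, if_neg hr, residueCharge]
      rw [filter_insert, if_neg hr, sum_old, ih, charge_insert]

lemma sum_gaps_le_card_oddGaps (X : Finset ℕ) (n : ℕ) :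
    ∑ m ∈ range n \ X with m % P = n % P, -(-1 : ℤ) ^ (n + m) ≤
      #{m ∈ oddGaps X n | P ∣ n - m} := by
  rw [oddGaps, filter_filter, card_filter, sum_filter, Nat.cast_sum]
  refine sum_le_sum fun m hm ↦ ?_
  have hmn : m ≤ n := (mem_range.1 (mem_sdiff.1 hm).1).le
  have hmod : m % P = n % P ↔ P ∣ n - m := Nat.modEq_iff_dvd' hmn
  rcases Nat.even_or_odd (n - m) with hpar | hpar
  · have : Even (n + m) := by grind
    split_ifs <;> simp [this.neg_one_pow]
  · have : Odd (n + m) := by grind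
    simp [hmod, hpar, this.neg_one_pow]

lemma sum_residueCharge_mul_le (hP : Odd P) (X : Finset ℕ) :
    ∑ r ∈ range P, residueCharge P X r * (residueCharge P X r - (-1) ^ r) ≤
      2 * ∑ n ∈ X, (#{m ∈ oddGaps X n | P ∣ n - m} : ℤ) := by
  have mod_mem : ∀ n ∈ X, n % P ∈ range P := fun n _ ↦ mem_range.2 (Nat.mod_lt n hP.pos)
  simp_rw [← two_mul_sum_gaps_residue hP, ← mul_sum]
  rw [← sum_fiberwise_of_maps_to mod_mem]
  gcongr with r _ n hn
  rw [← (mem_filter.1 hn).2]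
  exact sum_gaps_le_card_oddGaps X n

/-- The left-hand side is the secant, as a function of `c`, through the consecutive integers `m` and
`m + (-1) ^ r`. -/
lemma secant_le_mul_sub_neg_one_pow (c m : ℤ) (r : ℕ) :
    2 * m * c - m ^ 2 - m * (-1) ^ r ≤ c * (c - (-1) ^ r) := by
  suffices 0 ≤ (c - m) * (c - m - (-1) ^ r) by linarith
  rcases neg_one_pow_eq_or ℤ r with hs | hs <;> rw [hs]
  · linarith [Int.le_self_sq (c - m)]
  · linarith [Int.le_self_sq (m - c)]

theorem mul_sub_mul_sq_le_two_mul_sum_card_oddGaps (hP : Odd P) (X : Finset ℕ) (m : ℤ) :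
    m * (2 * ∑ n ∈ X, (-1) ^ n - 1) - P * m ^ 2 ≤
      2 * ∑ n ∈ X, (#{j ∈ oddGaps X n | P ∣ n - j} : ℤ) := by
  have sum_charge : ∑ r ∈ range P, residueCharge P X r = ∑ n ∈ X, (-1) ^ n :=
    sum_fiberwise_of_maps_to (fun n _ ↦ mem_range.2 (Nat.mod_lt n hP.pos)) _
  have sum_sign : ∑ r ∈ range P, (-1 : ℤ) ^ r = 1 := by
    rw [neg_one_geom_sum, if_neg (Nat.not_even_iff_odd.2 hP)]
  calc m * (2 * ∑ n ∈ X, (-1) ^ n - 1) - P * m ^ 2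
      = ∑ r ∈ range P, (2 * m * residueCharge P X r - m ^ 2 - m * (-1) ^ r) := by
        simp only [sum_sub_distrib, ← mul_sum, sum_charge, sum_sign, sum_const, card_range,
          nsmul_eq_mul]
        ring
    _ ≤ ∑ r ∈ range P, residueCharge P X r * (residueCharge P X r - (-1) ^ r) :=
        sum_le_sum fun r _ ↦ secant_le_mul_sub_neg_one_pow _ m r
    _ ≤ _ := sum_residueCharge_mul_le hP X

end SignedGaps

section BetaSets

variable {X : Finset ℕ} {k : ℕ}

lemma sum_card_staircase_dvd_le_sum_card_oddGaps_dvd {P : ℕ} (hP : Odd P)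
    (hk : (2 * k + 1 : ℤ) = |2 * ∑ n ∈ X, (-1) ^ n - 1|) :
    ∑ m ∈ Icc 1 k, #{i ∈ Icc 1 m | P ∣ 2 * i - 1} ≤ ∑ n ∈ X, #{m ∈ oddGaps X n | P ∣ n - m} := by
  obtain ⟨h, rfl⟩ := hP
  simp_rw [card_filter_dvd_two_mul_sub_one]
  have stair := two_mul_sum_Icc_add_div h k
  have bound := mul_sub_mul_sq_le_two_mul_sum_card_oddGaps (odd_two_mul_add_one h) X
  rw [← Nat.cast_le (α := ℤ), Nat.cast_sum, Nat.cast_sum]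
  set J : ℤ := (((k + h) / (2 * h + 1) : ℕ) : ℤ)
  rcases abs_cases (2 * ∑ n ∈ X, (-1 : ℤ) ^ n - 1) with ⟨habs, -⟩ | ⟨habs, -⟩
  · have := bound J
    rw [← habs, ← hk] at this
    push_cast at this
    linarith
  · have := bound (-J)
    rw [show 2 * ∑ n ∈ X, (-1 : ℤ) ^ n - 1 = -(2 * k + 1) by linarith] at this
    push_cast at this
    linarith

theorem Hstaircase_dvd_prod_oddGaps (hk : (2 * k + 1 : ℤ) = |2 * ∑ n ∈ X, (-1) ^ n - 1|) :
    Hstaircase k ∣ ∏ n ∈ X, ∏ m ∈ oddGaps X n, (n - m) := by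
  rw [Hstaircase_eq_prod_prod, prod_sigma', prod_sigma']
  have odd_stair : ∀ x ∈ (Icc 1 k).sigma fun m ↦ Icc 1 m, Odd (2 * x.2 - 1) := fun x hx ↦
    ⟨x.2 - 1, by have := mem_Icc.1 (mem_sigma.1 hx).2; lia⟩
  have odd_gap : ∀ x ∈ X.sigma (oddGaps X), Odd (x.1 - x.2) := fun x hx ↦
    (mem_filter.1 (mem_sigma.1 hx).2).2
  refine prod_dvd_prod_of_card_filter_dvd_le (fun x hx ↦ (odd_stair x hx).pos.ne')
    (fun x hx ↦ (odd_gap x hx).pos.ne') fun d _ ↦ ?_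
  by_cases hd : Odd d
  · simpa only [filter_sigma, card_sigma] using
      sum_card_staircase_dvd_le_sum_card_oddGaps_dvd hd hk
  · rw [filter_eq_empty_iff.2 fun x hx hdvd ↦ hd ((odd_stair x hx).of_dvd_nat hdvd), card_empty]
    exact Nat.zero_le _

end BetaSets

section Partitions

variable {l : List ℕ}

/-- The beta-set of a partition: the set of entries of its degree vector. -/
def betaSet (l : List ℕ) : Finset ℕ := univ.image (degVec l)

lemma degVec_strictAnti (hl : l.Pairwise (· ≥ ·)) : StrictAnti (degVec l) := by
  intro i j hij
  have := List.pairwise_iff_get.1 hl i j hij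
  have : (i : ℕ) < j := hij
  unfold degVec
  lia

lemma conjPart_le_length (l : List ℕ) (j : ℕ) : conjPart l j ≤ l.length :=
  List.length_filter_le _ _

lemma conjPart_antitone (l : List ℕ) : Antitone (conjPart l) :=
  fun _ _ hab ↦ (List.monotone_filter_right l fun _ h ↦ by
    simp only [decide_eq_true_eq] at h ⊢
    exact hab.trans h).length_le

lemma lt_conjPart_iff (hl : l.Pairwise (· ≥ ·)) (i : Fin l.length) (j : ℕ) :
    (i : ℕ) < conjPart l j ↔ j ≤ l.get i := by
  induction l with
  | nil => exact i.elim0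
  | cons a l ih =>
    obtain ⟨ha, hl⟩ := List.pairwise_cons.1 hl
    have conj_cons : conjPart (a :: l) j = if j ≤ a then conjPart l j + 1 else 0 := by
      simp only [conjPart, List.filter_cons, decide_eq_true_eq]
      split_ifs with haj
      · rfl
      · exact List.length_eq_zero_iff.2 <| List.filter_eq_nil_iff.2 fun b hb ↦ by
          have := ha b hb
          simp only [decide_eq_true_eq]
          lia
    rw [conj_cons]
    cases i using Fin.cases with
    | zero => split_ifs with haj <;> simp [haj]
    | succ i =>
      have := ha _ (l.get_mem i)
      have := ih hl i
      rw [Fin.val_succ, List.get_cons_succ']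
      split_ifs <;> lia

/-- The entries of the beta-set mark the vertical steps of the boundary path of the Young diagram;
`columnGap l j` is the position of the horizontal step below column `j`, with columns
numbered from `1`. -/
def columnGap (l : List ℕ) (j : ℕ) : ℕ := l.length + (j - 1) - conjPart l j

lemma columnGap_strictMonoOn (l : List ℕ) : StrictMonoOn (columnGap l) (Set.Ici 1) := by
  intro a ha b hb hab
  have := conjPart_antitone l hab.le
  have := conjPart_le_length l a
  simp only [Set.mem_Ici] at ha hb
  unfold columnGap
  lia

lemma columnGap_add_hookLen (hl : l.Pairwise (· ≥ ·)) (i : Fin l.length) {j : ℕ}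
    (hj : j ∈ Icc 1 (l.get i)) : columnGap l j + hookLen l i j = degVec l i := by
  rw [mem_Icc] at hj
  have := (lt_conjPart_iff hl i j).2 hj.2
  have := conjPart_le_length l j
  unfold columnGap hookLen degVec
  lia

lemma columnGap_notMem_betaSet (hl : l.Pairwise (· ≥ ·)) {j : ℕ} (hj : 1 ≤ j) :
    columnGap l j ∉ betaSet l := by
  simp only [betaSet, mem_image, mem_univ, true_and, not_exists]
  intro i
  have := lt_conjPart_iff hl i j
  have := conjPart_le_length l j
  unfold columnGap degVec
  lia

lemma card_range_degVec_sdiff_betaSet (hl : l.Pairwise (· ≥ ·)) (i : Fin l.length) :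
    #(range (degVec l i) \ betaSet l) = l.get i := by
  have hinter : betaSet l ∩ range (degVec l i) = (Ioi i).image (degVec l) := by
    ext n
    simp only [betaSet, mem_inter, mem_image, mem_univ, true_and, mem_range, mem_Ioi]
    constructor
    · rintro ⟨⟨r, rfl⟩, hr⟩
      exact ⟨r, (degVec_strictAnti hl).lt_iff_gt.1 hr, rfl⟩
    · rintro ⟨r, hr, rfl⟩
      exact ⟨⟨r, rfl⟩, degVec_strictAnti hl hr⟩
  rw [card_sdiff, hinter, card_image_of_injective _ (degVec_strictAnti hl).injective, card_range,
    Fin.card_Ioi, degVec, Nat.add_sub_cancel]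

lemma image_columnGap (hl : l.Pairwise (· ≥ ·)) (i : Fin l.length) :
    (Icc 1 (l.get i)).image (columnGap l) = range (degVec l i) \ betaSet l := by
  apply eq_of_subset_of_card_le
  · intro m hm
    obtain ⟨j, hj, rfl⟩ := mem_image.1 hm
    have hook_pos : 0 < hookLen l i j := Nat.succ_pos _
    have := columnGap_add_hookLen hl i hj
    exact mem_sdiff.2 ⟨mem_range.2 (by lia), columnGap_notMem_betaSet hl (mem_Icc.1 hj).1⟩
  · rw [card_range_degVec_sdiff_betaSet hl, card_image_of_injOn, Nat.card_Icc,
      Nat.add_sub_cancel]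
    exact (columnGap_strictMonoOn l).injOn.mono fun j hj ↦ (mem_Icc.1 hj).1

lemma prod_hookLen_row {M : Type*} [CommMonoid M] (hl : l.Pairwise (· ≥ ·)) (i : Fin l.length)
    (f : ℕ → M) :
    ∏ j ∈ Icc 1 (l.get i), f (hookLen l i j) =
      ∏ m ∈ range (degVec l i) \ betaSet l, f (degVec l i - m) := by
  rw [← image_columnGap hl, prod_image]
  · refine prod_congr rfl fun j hj ↦ ?_
    rw [← columnGap_add_hookLen hl i hj, Nat.add_sub_cancel_left]
  · exact (columnGap_strictMonoOn l).injOn.mono fun j hj ↦ (mem_Icc.1 hj).1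

lemma Hodd_eq_prod_oddGaps (hl : l.Pairwise (· ≥ ·)) :
    Hodd l = ∏ n ∈ betaSet l, ∏ m ∈ oddGaps (betaSet l) n, (n - m) := by
  have prod_row (i : Fin l.length) := prod_hookLen_row hl i fun h ↦ if Odd h then h else 1
  simp_rw [Hodd, prod_row, oddGaps, prod_filter]
  rw [betaSet, prod_image (degVec_strictAnti hl).injective.injOn]

lemma sum_betaSet_neg_one_pow (hl : l.Pairwise (· ≥ ·)) :
    ∑ n ∈ betaSet l, (-1 : ℤ) ^ n = evenCount l - oddCount l := by
  rw [betaSet, sum_image (degVec_strictAnti hl).injective.injOn, evenCount, oddCount,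
    natCast_card_filter, natCast_card_filter, ← sum_sub_distrib]
  refine sum_congr rfl fun i _ ↦ ?_
  rcases Nat.even_or_odd (degVec l i) with hpar | hpar
  · simp [hpar, hpar.neg_one_pow, Nat.not_odd_iff_even.2 hpar]
  · simp [hpar, hpar.neg_one_pow, Nat.not_even_iff_odd.2 hpar]

lemma two_mul_coreK_add_one (hl : l.Pairwise (· ≥ ·)) :
    (2 * coreK l + 1 : ℤ) = |2 * ∑ n ∈ betaSet l, (-1) ^ n - 1| := by
  rw [sum_betaSet_neg_one_pow hl, coreK]
  split_ifs with hle
  · rw [abs_of_nonpos] <;> lia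
  · rw [abs_of_nonneg] <;> lia

end Partitions

/-- The product of the hook lengths of the 2-core (the staircase `(k,k−1,…,1)`)
divides the product of all odd hook lengths of `λ`. -/
theorem staircaseHooks_dvd_Hodd (l : List ℕ) (hl : IsPartition l) :
    Hstaircase (coreK l) ∣ Hodd l := by
  rw [Hodd_eq_prod_oddGaps hl.1]
  exact Hstaircase_dvd_prod_oddGaps (two_mul_coreK_add_one hl.1)
end
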